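/- Every Gruenhage compact space has the Bishop property (B). -/

import Mathlib

open Set Topology Filter

/-- `f ≺ g`: `f ≠ g` and `f` agrees with `g` on the support of `f` (the closure of
the set where `f` is nonzero). -/
def Prec {K : Type*} [TopologicalSpace K] (f g : C(K, ℝ)) : Prop :=
  f ≠ g ∧ ∀ t ∈ closure {t | f t ≠ 0}, f t = g t

/-- `f ≺_δ g`: `f ≺ g` and `‖f - g‖ ≥ δ`. -/
def PrecDelta {K : Type*} [TopologicalSpace K] [CompactSpace K] (δ : ℝ) (f g : C(K, ℝ)) : Prop :=
  Prec f g ∧ δ ≤ ‖f - g‖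

/-- `F` is a `δ`-`≺`-chain. -/
def IsPrecChain {K : Type*} [TopologicalSpace K] [CompactSpace K] (δ : ℝ)
    (F : Set C(K, ℝ)) : Prop :=
  ∀ f ∈ F, ∀ g ∈ F, f ≠ g → PrecDelta δ f g ∨ PrecDelta δ g f

/-- A compact Hausdorff space has the Bishop property (B) if for every `δ > 0`
every `δ`-`≺`-chain in `C(K)` is countable. -/
def HasBishop (K : Type*) [TopologicalSpace K] [CompactSpace K] [T2Space K] : Prop :=
  ∀ δ : ℝ, 0 < δ → ∀ F : Set C(K, ℝ), IsPrecChain δ F → F.Countable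

/-- No member of `𝒱` contains a point of `A` without containing all of `A`. -/
def Unsplit {X : Type*} (𝒱 : Set (Set X)) (A : Set X) : Prop :=
  ∀ V ∈ 𝒱, ∀ x ∈ A, ∀ y ∈ A, x ∈ V → y ∈ V

/-- The members of `𝒱` contain `Q` and are pairwise disjoint off `Q`. -/
def IsSunflower {X : Type*} (𝒱 : Set (Set X)) (Q : Set X) : Prop :=
  (∀ V ∈ 𝒱, Q ⊆ V) ∧ ∀ V ∈ 𝒱, ∀ W ∈ 𝒱, V ≠ W → V ∩ W ⊆ Q

theorem IsSunflower.eq_of_mem {X : Type*} {𝒱 : Set (Set X)} {Q : Set X} (h : IsSunflower 𝒱 Q)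
    {V W : Set X} (hV : V ∈ 𝒱) (hW : W ∈ 𝒱) {x : X} (hxV : x ∈ V) (hxW : x ∈ W) (hx : x ∉ Q) :
    V = W := by
  by_contra hne
  exact hx (h.2 V hV W hW hne ⟨hxV, hxW⟩)

theorem IsSunflower.finite_meeting {X : Type*} [TopologicalSpace X] {𝒱 : Set (Set X)} {Q Z : Set X}
    (h : IsSunflower 𝒱 Q) (ho : ∀ V ∈ 𝒱, IsOpen V) (hZ : IsCompact Z) (hZQ : Disjoint Z Q)
    (hcov : Z ⊆ ⋃₀ 𝒱) : {V ∈ 𝒱 | (V ∩ Z).Nonempty}.Finite := by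
  obtain ⟨T, hT𝒱, hTfin, hTcov⟩ :=
    hZ.elim_finite_subcover_image (c := id) ho (by simpa [← sUnion_eq_biUnion] using hcov)
  simp only [id, ← sUnion_eq_biUnion] at hTcov
  refine hTfin.subset ?_
  rintro V ⟨hV, x, hxV, hxZ⟩
  obtain ⟨W, hW, hxW⟩ := hTcov hxZ
  rwa [h.eq_of_mem hV (hT𝒱 hW) hxV hxW (hZQ.notMem_of_mem_left hxZ)]

theorem unsplit_diff_sUnion {X : Type*} {𝒱 : Set (Set X)} {H T V : Set X} (hcov : H ∩ T ⊆ ⋃₀ 𝒱) :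
    Unsplit 𝒱 ((H \ ⋃₀ (𝒱 \ {V})) ∩ T) := by
  have key : ∀ W ∈ 𝒱, ∀ x ∈ (H \ ⋃₀ (𝒱 \ {V})) ∩ T, x ∈ W → W = V := by
    rintro W hW x ⟨⟨-, hx⟩, -⟩ hxW
    by_contra hne
    exact hx ⟨W, ⟨hW, hne⟩, hxW⟩
  intro W hW x hx y hy hxW
  obtain ⟨S, hS, hyS⟩ := hcov ⟨hy.1.1, hy.2⟩
  rwa [key W hW x hx hxW, ← key S hS y hy hyS]

/-- If the large sets (those satisfying `B`) can be shrunk so as to decide each open set involved,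
then there is a decreasing sequence of large sets whose traces on `T` are unsplit by the successive
families. -/
theorem exists_antitone_unsplit {X : Type*} {U : ℕ → Set (Set X)} {R : ℕ → Set X}
    (hs : ∀ n, IsSunflower (U n) (R n)) (B : Set X → Prop) (T : Set X) {H₀ : Set X} (h₀ : B H₀)
    (hR : ∀ n H, B H → B (H \ R n) ∨ ∃ H' ⊆ H, B H' ∧ H' ∩ T ⊆ R n)
    (hU : ∀ n H, B H → B (H \ ⋃₀ U n) ∨ ∃ H' ⊆ H, B H' ∧ H' ∩ T ⊆ ⋃₀ U n)
    (hV : ∀ n H, B H → Disjoint H (R n) → H ∩ T ⊆ ⋃₀ U n →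
      ∃ V ∈ U n, B (H \ ⋃₀ (U n \ {V}))) :
    ∃ H : ℕ → Set X, Antitone H ∧ (∀ n, B (H n)) ∧ ∀ n, Unsplit (U n) (H (n + 1) ∩ T) := by
  have step : ∀ n, ∀ H : {H // B H}, ∃ H' : {H // B H}, H'.1 ⊆ H.1 ∧ Unsplit (U n) (H'.1 ∩ T) := by
    rintro n ⟨H, hH⟩
    rcases hR n H hH with h | ⟨H', hsub, hB, hH'⟩
    · rcases hU n _ h with h' | ⟨H', hsub, hB, hH'⟩
      · refine ⟨⟨_, h'⟩, sdiff_subset.trans sdiff_subset, ?_⟩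
        rintro V hVU x ⟨⟨-, hx⟩, -⟩ y - hxV
        exact absurd ⟨V, hVU, hxV⟩ hx
      · obtain ⟨V, -, hVB⟩ := hV n H' hB (disjoint_sdiff_left.mono_left hsub) hH'
        exact ⟨⟨_, hVB⟩, sdiff_subset.trans (hsub.trans sdiff_subset), unsplit_diff_sUnion hH'⟩
    · exact ⟨⟨H', hB⟩, hsub, fun V hVU x _ y hy _ => (hs n).1 V hVU (hH' hy)⟩
  choose f hf using step
  let H : ℕ → {H // B H} := fun n => Nat.rec ⟨H₀, h₀⟩ f n
  exact ⟨fun n => (H n).1, antitone_nat_of_succ_le fun n => (hf n (H n)).1, fun n => (H n).2,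
    fun n => (hf n (H n)).2⟩

/-- A countably directed family of clopen sets without largest element cannot exist in a compact
space with a `σ`-sunflower separating family. -/
theorem not_countably_directed_clopens {X : Type*} [TopologicalSpace X] [CompactSpace X]
    {U : ℕ → Set (Set X)} {R : ℕ → Set X}
    (hUo : ∀ n, ∀ V ∈ U n, IsOpen V) (hRo : ∀ n, IsOpen (R n))
    (hs : ∀ n, IsSunflower (U n) (R n))
    (hsep : ∀ x y : X, x ≠ y → ∃ n, ¬ Unsplit (U n) {x, y})
    {𝒟 : Set (Set X)} (hclopen : ∀ D ∈ 𝒟, IsClopen D)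
    (hdir : ∀ S ⊆ 𝒟, S.Countable → ∃ D ∈ 𝒟, ∀ C ∈ S, C ⊂ D) : False := by
  let T := ⋃₀ 𝒟
  let B : Set X → Prop := fun H => IsClosed H ∧ ∀ D ∈ 𝒟, ((H ∩ T) \ D).Nonempty
  have hpair : ∀ C ∈ 𝒟, ∀ D ∈ 𝒟, ∃ E ∈ 𝒟, C ⊆ E ∧ D ⊆ E := by
    intro C hC D hD
    obtain ⟨E, hE, h⟩ := hdir {C, D} (by simp [insert_subset_iff, hC, hD]) (by simp)
    exact ⟨E, hE, (h C (by simp)).subset, (h D (by simp)).subset⟩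
  have hbound : ∀ x : ℕ → X, (∀ k, x k ∈ T) → ∃ D ∈ 𝒟, ∀ k, x k ∈ D := by
    intro x hx
    choose D hD hxD using hx
    obtain ⟨E, hE, h⟩ := hdir (range D) (range_subset_iff.2 hD) (countable_range D)
    exact ⟨E, hE, fun k => (h _ (mem_range_self k)).subset (hxD k)⟩
  have h₀ : B univ := by
    refine ⟨isClosed_univ, fun D hD => ?_⟩
    obtain ⟨E, hE, h⟩ := hdir {D} (by simpa using hD) (by simp)
    obtain ⟨x, hxE, hxD⟩ := exists_of_ssubset (h D rfl)
    exact ⟨x, ⟨mem_univ x, E, hE, hxE⟩, hxD⟩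
  have dichotomy : ∀ W, IsOpen W → ∀ H, B H →
      B (H \ W) ∨ ∃ H' ⊆ H, B H' ∧ H' ∩ T ⊆ W := by
    intro W hW H hH
    by_cases hB : B (H \ W)
    · exact Or.inl hB
    · right
      have : ∃ D ∈ 𝒟, ¬ (((H \ W) ∩ T) \ D).Nonempty := by
        by_contra! hcon
        exact hB ⟨hH.1.sdiff hW, hcon⟩
      obtain ⟨D, hD, hne⟩ := this
      refine ⟨H \ D, sdiff_subset, ⟨hH.1.sdiff (hclopen D hD).isOpen, fun C hC => ?_⟩, ?_⟩
      · obtain ⟨E, hE, hCE, hDE⟩ := hpair C hC D hD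
        obtain ⟨x, ⟨hxH, hxT⟩, hxE⟩ := hH.2 E hE
        exact ⟨x, ⟨⟨hxH, fun h => hxE (hDE h)⟩, hxT⟩, fun h => hxE (hCE h)⟩
      · rintro x ⟨⟨hxH, hxD⟩, hxT⟩
        by_contra hxW
        exact hne ⟨x, ⟨⟨hxH, hxW⟩, hxT⟩, hxD⟩
  have hV : ∀ n H, B H → Disjoint H (R n) → H ∩ T ⊆ ⋃₀ U n →
      ∃ V ∈ U n, B (H \ ⋃₀ (U n \ {V})) := by
    intro n H hH hHR hcov
    by_contra! hcon
    have hfin : {V ∈ U n | (V ∩ (H ∩ T)).Nonempty}.Finite := by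
      by_contra hinf
      let e := Set.Infinite.natEmbedding _ hinf
      have he : ∀ k, (e k).1 ∈ U n ∧ ((e k).1 ∩ (H ∩ T)).Nonempty := fun k => (e k).2
      choose hemem x hxe hxH using he
      obtain ⟨D, hD, hxD⟩ := hbound x fun k => (hxH k).2
      have hfin' := (hs n).finite_meeting (hUo n) (hH.1.inter (hclopen D hD).isClosed).isCompact
        (hHR.mono_left inter_subset_left) fun y hy => hcov ⟨hy.1, D, hD, hy.2⟩
      refine Set.infinite_of_injective_forall_mem (f := fun k => (e k).1)
        (Subtype.val_injective.comp e.injective) (fun k => ?_) hfin'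
      exact ⟨hemem k, x k, hxe k, (hxH k).1, hxD k⟩
    have hbd : ∀ V ∈ U n, ∃ D ∈ 𝒟, ∀ x ∈ V, x ∈ H → x ∈ T → x ∈ D := by
      intro V hVU
      by_contra! hcon'
      refine hcon V hVU ⟨hH.1.sdiff (isOpen_sUnion fun W hW => hUo n W hW.1), fun D hD => ?_⟩
      obtain ⟨x, hxV, hxH, hxT, hxD⟩ := hcon' D hD
      refine ⟨x, ⟨⟨hxH, ?_⟩, hxT⟩, hxD⟩
      rintro ⟨W, ⟨hW, hne⟩, hxW⟩
      exact hne ((hs n).eq_of_mem hW hVU hxW hxV (hHR.notMem_of_mem_left hxH))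
    choose! D hD hbd using hbd
    obtain ⟨E, hE, hDE⟩ := hdir (D '' {V ∈ U n | (V ∩ (H ∩ T)).Nonempty})
      (by rintro _ ⟨V, hVU, rfl⟩; exact hD V hVU.1) (hfin.image D).countable
    obtain ⟨x, hxHT, hxE⟩ := hH.2 E hE
    obtain ⟨V, hVU, hxV⟩ := hcov hxHT
    exact hxE ((hDE _ ⟨V, ⟨hVU, x, hxV, hxHT⟩, rfl⟩).subset (hbd V hVU x hxV hxHT.1 hxHT.2))
  obtain ⟨H, hanti, hB, hH⟩ := exists_antitone_unsplit hs B T h₀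
    (fun n => dichotomy _ (hRo n)) (fun n => dichotomy _ (isOpen_sUnion (hUo n))) hV
  have hpt : ∀ D ∈ 𝒟, ∃ x, (∀ n, x ∈ H n) ∧ x ∈ T ∧ x ∉ D := by
    intro D hD
    choose x hx hxD using fun n => (hB n).2 D hD
    obtain ⟨E, hE, hxE⟩ := hbound x fun n => (hx n).2
    have hclosed : ∀ n, IsClosed (H n ∩ (E \ D)) := fun n =>
      (hB n).1.inter ((hclopen E hE).isClosed.sdiff (hclopen D hD).isOpen)
    obtain ⟨y, hy⟩ := IsCompact.nonempty_iInter_of_sequence_nonempty_isCompact_isClosed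
      (fun n => H n ∩ (E \ D)) (fun n => inter_subset_inter_left _ (hanti n.le_succ))
      (fun n => ⟨x n, (hx n).1, hxE n, hxD n⟩) (hclosed 0).isCompact hclosed
    rw [mem_iInter] at hy
    exact ⟨y, fun n => (hy n).1, ⟨E, hE, (hy 0).2.1⟩, (hy 0).2.2⟩
  obtain ⟨D, hD, -⟩ := hdir ∅ (empty_subset _) countable_empty
  obtain ⟨x, hxH, hxT, -⟩ := hpt D hD
  obtain ⟨E, hE, hxE⟩ := hxT
  obtain ⟨y, hyH, hyT, hyE⟩ := hpt E hE
  obtain ⟨n, hn⟩ := hsep x y fun h => hyE (h ▸ hxE)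
  have hsub : ({x, y} : Set X) ⊆ H (n + 1) ∩ T :=
    insert_subset ⟨hxH _, E, hE, hxE⟩ (singleton_subset_iff.2 ⟨hyH _, hyT⟩)
  exact hn fun V hVU a ha b hb => hH n V hVU a (hsub ha) b (hsub hb)

theorem exists_countable_closed_under {α : Type*} (f : α → α → α → Set α)
    (hf : ∀ a b c, (f a b c).Countable) {s : Set α} (hs : s.Countable) :
    ∃ t, s ⊆ t ∧ t.Countable ∧ ∀ a ∈ t, ∀ b ∈ t, ∀ c ∈ t, f a b c ⊆ t := by
  let g : Set α → Set α := fun t => t ∪ ⋃ a ∈ t, ⋃ b ∈ t, ⋃ c ∈ t, f a b c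
  let t : ℕ → Set α := fun n => Nat.rec s (fun _ => g) n
  have hmono : Monotone t := monotone_nat_of_le_succ fun n => subset_union_left
  refine ⟨⋃ n, t n, subset_iUnion t 0, countable_iUnion fun n => ?_, ?_⟩
  · induction n with
    | zero => exact hs
    | succ n ih =>
      exact ih.union (ih.biUnion fun a _ => ih.biUnion fun b _ => ih.biUnion fun c _ => hf a b c)
  · intro a ha b hb c hc x hx
    obtain ⟨i, hi⟩ := mem_iUnion.1 ha
    obtain ⟨j, hj⟩ := mem_iUnion.1 hb
    obtain ⟨k, hk⟩ := mem_iUnion.1 hc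
    refine mem_iUnion.2 ⟨max i (max j k) + 1, Or.inr ?_⟩
    simp only [mem_iUnion]
    exact ⟨a, hmono (le_max_left _ _) hi,
      b, hmono ((le_max_left _ _).trans (le_max_right _ _)) hj,
      c, hmono ((le_max_right _ _).trans (le_max_right _ _)) hk, hx⟩

/-- A chain of clopen sets all of whose subchains have countable cofinality and coinitiality is
countable, in a compact space with a `σ`-sunflower separating family. -/
theorem countable_clopen_chain_of_cofinality {X : Type*} [TopologicalSpace X] [CompactSpace X]
    {U : ℕ → Set (Set X)} {R : ℕ → Set X}
    (hUo : ∀ n, ∀ V ∈ U n, IsOpen V) (hRo : ∀ n, IsOpen (R n))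
    (hs : ∀ n, IsSunflower (U n) (R n))
    (hsep : ∀ x y : X, x ≠ y → ∃ n, ¬ Unsplit (U n) {x, y})
    {𝒞 : Set (Set X)} (hclopen : ∀ C ∈ 𝒞, IsClopen C)
    (hchain : ∀ C ∈ 𝒞, ∀ D ∈ 𝒞, C ⊆ D ∨ D ⊆ C) (hempty : ∅ ∈ 𝒞) (huniv : univ ∈ 𝒞)
    (hcof : ∀ 𝒟 ⊆ 𝒞, ∃ S ⊆ 𝒟, S.Countable ∧ ∀ D ∈ 𝒟, ∃ C ∈ S, D ⊆ C)
    (hcoi : ∀ 𝒟 ⊆ 𝒞, ∃ S ⊆ 𝒟, S.Countable ∧ ∀ D ∈ 𝒟, ∃ C ∈ S, C ⊆ D) : 𝒞.Countable := by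
  by_contra hunc
  have hop : ∀ D E H : Set X, ∃ S : Set (Set X), S.Countable ∧
      (∀ C ∈ 𝒞, D ⊆ C → Disjoint H (C \ D) → ∃ C' ∈ S, C' ∈ 𝒞 ∧ C ⊆ C' ∧ Disjoint H (C' \ D)) ∧
      (∀ C ∈ 𝒞, C ⊆ D → Disjoint H (D \ C) → ∃ C' ∈ S, C' ∈ 𝒞 ∧ C' ⊆ C ∧ Disjoint H (D \ C')) ∧
      (∀ n, H \ R n ∈ S) ∧ (∀ n, H \ ⋃₀ U n ∈ S) ∧
      ∀ n, IsClosed H → IsClopen D → IsClopen E → Disjoint H (R n) → H ∩ (E \ D) ⊆ ⋃₀ U n →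
        ∀ V ∈ U n, (V ∩ (H ∩ (E \ D))).Nonempty → H \ ⋃₀ (U n \ {V}) ∈ S := by
    intro D E H
    obtain ⟨S₁, hS₁, hc₁, h₁⟩ := hcof {C ∈ 𝒞 | D ⊆ C ∧ Disjoint H (C \ D)} (sep_subset _ _)
    obtain ⟨S₂, hS₂, hc₂, h₂⟩ := hcoi {C ∈ 𝒞 | C ⊆ D ∧ Disjoint H (D \ C)} (sep_subset _ _)
    have h₃ : ∀ n, ∃ S : Set (Set X), S.Countable ∧
        (IsClosed H → IsClopen D → IsClopen E → Disjoint H (R n) → H ∩ (E \ D) ⊆ ⋃₀ U n →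
        ∀ V ∈ U n, (V ∩ (H ∩ (E \ D))).Nonempty → H \ ⋃₀ (U n \ {V}) ∈ S) := by
      intro n
      by_cases hcond : IsClosed H ∧ IsClopen D ∧ IsClopen E ∧ Disjoint H (R n) ∧
        H ∩ (E \ D) ⊆ ⋃₀ U n
      · obtain ⟨hH, hD, hE, hHR, hcov⟩ := hcond
        have hfin := (hs n).finite_meeting (hUo n)
          (hH.inter (hE.isClosed.sdiff hD.isOpen)).isCompact
          (hHR.mono_left inter_subset_left) hcov
        exact ⟨(fun V => H \ ⋃₀ (U n \ {V})) '' _, (hfin.image _).countable,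
          fun _ _ _ _ _ V hV hne => ⟨V, ⟨hV, hne⟩, rfl⟩⟩
      · exact ⟨∅, countable_empty, fun a b c d e => (hcond ⟨a, b, c, d, e⟩).elim⟩
    choose S₃ hc₃ h₃ using h₃
    refine ⟨S₁ ∪ S₂ ∪ range (fun n => H \ R n) ∪ range (fun n => H \ ⋃₀ U n) ∪ ⋃ n, S₃ n,
      (((hc₁.union hc₂).union (countable_range _)).union (countable_range _)).union
        (countable_iUnion hc₃), ?_, ?_, ?_, ?_, ?_⟩
    · intro C hC hDC hH
      obtain ⟨C', hC', hsub⟩ := h₁ C ⟨hC, hDC, hH⟩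
      exact ⟨C', Or.inl (Or.inl (Or.inl (Or.inl hC'))), (hS₁ hC').1, hsub, (hS₁ hC').2.2⟩
    · intro C hC hDC hH
      obtain ⟨C', hC', hsub⟩ := h₂ C ⟨hC, hDC, hH⟩
      exact ⟨C', Or.inl (Or.inl (Or.inl (Or.inr hC'))), (hS₂ hC').1, hsub, (hS₂ hC').2.2⟩
    · exact fun n => Or.inl (Or.inl (Or.inr ⟨n, rfl⟩))
    · exact fun n => Or.inl (Or.inr ⟨n, rfl⟩)
    · exact fun n a b c d e V hV hne => Or.inr (mem_iUnion.2 ⟨n, h₃ n a b c d e V hV hne⟩)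
  choose f hfc hfup hfdown hfR hfU hfV using hop
  obtain ⟨M, hM₀, hMc, hM⟩ := exists_countable_closed_under f hfc
    (s := {∅, univ}) (by simp)
  have hMempty : ∅ ∈ M := hM₀ (by simp)
  have hMuniv : univ ∈ M := hM₀ (by simp)
  obtain ⟨C, hC, hCM⟩ : ∃ C ∈ 𝒞, C ∉ M := by
    by_contra! h
    exact hunc (hMc.mono h)
  let Φ : Set X := {x | x ∈ C ∧ ∀ D ∈ M, D ∈ 𝒞 → D ⊆ C → x ∉ D}
  let Ψ : Set X := {x | x ∉ C ∧ ∀ E ∈ M, E ∈ 𝒞 → C ⊆ E → x ∈ E}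
  have hΦclosed : IsClosed Φ := by
    have : Φ = C ∩ ⋂ D ∈ {D | D ∈ M ∧ D ∈ 𝒞 ∧ D ⊆ C}, Dᶜ := by
      ext x; simp +contextual [Φ]
    rw [this]
    exact (hclopen C hC).isClosed.inter
      (isClosed_biInter fun D hD => (hclopen D hD.2.1).isOpen.isClosed_compl)
  have hΨclosed : IsClosed Ψ := by
    have : Ψ = Cᶜ ∩ ⋂ E ∈ {E | E ∈ M ∧ E ∈ 𝒞 ∧ C ⊆ E}, E := by
      ext x; simp +contextual [Ψ]
    rw [this]
    exact (hclopen C hC).isOpen.isClosed_compl.inter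
      (isClosed_biInter fun D hD => (hclopen D hD.2.1).isClosed)
  have hΦgap : ∀ H ∈ M, IsClosed H → ¬ (H ∩ Φ).Nonempty →
      ∃ D ∈ M, ∃ E ∈ M, D ∈ 𝒞 ∧ E ∈ 𝒞 ∧ D ⊆ C ∧ C ⊆ E ∧ Disjoint H (E \ D) := by
    intro H hHM hH hne
    have : Nonempty {D // D ∈ M ∧ D ∈ 𝒞 ∧ D ⊆ C} := ⟨⟨∅, hMempty, hempty, empty_subset _⟩⟩
    obtain ⟨⟨D, hDM, hD, hDC⟩, hcov⟩ :=
      (hH.inter (hclopen C hC).isClosed).isCompact.elim_directed_cover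
      (fun D : {D // D ∈ M ∧ D ∈ 𝒞 ∧ D ⊆ C} => D.1) (fun D => (hclopen _ D.2.2.1).isOpen)
      (by
        rintro x ⟨hxH, hxC⟩
        by_contra hx
        refine hne ⟨x, hxH, hxC, fun D hDM hD hDC hxD => hx ?_⟩
        exact mem_iUnion.2 ⟨⟨D, hDM, hD, hDC⟩, hxD⟩)
      (by
        intro D E
        rcases hchain _ D.2.2.1 _ E.2.2.1 with h | h
        · exact ⟨E, h, Subset.rfl⟩
        · exact ⟨D, Subset.rfl, h⟩)
    obtain ⟨E, hEM, hE, hCE, hHE⟩ := hfup D D H C hC hDC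
      (disjoint_left.2 fun x hxH hx => hx.2 (hcov ⟨hxH, hx.1⟩))
    exact ⟨D, hDM, E, hM D hDM D hDM H hHM hEM, hD, hE, hDC, hCE, hHE⟩
  have hΨgap : ∀ H ∈ M, IsClosed H → ¬ (H ∩ Ψ).Nonempty →
      ∃ D ∈ M, ∃ E ∈ M, D ∈ 𝒞 ∧ E ∈ 𝒞 ∧ D ⊆ C ∧ C ⊆ E ∧ Disjoint H (E \ D) := by
    intro H hHM hH hne
    have : Nonempty {E // E ∈ M ∧ E ∈ 𝒞 ∧ C ⊆ E} := ⟨⟨univ, hMuniv, huniv, subset_univ _⟩⟩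
    obtain ⟨⟨E, hEM, hE, hCE⟩, hcov⟩ :=
      (hH.sdiff (hclopen C hC).isOpen).isCompact.elim_directed_cover
      (fun E : {E // E ∈ M ∧ E ∈ 𝒞 ∧ C ⊆ E} => E.1ᶜ)
      (fun E => (hclopen _ E.2.2.1).isClosed.isOpen_compl)
      (by
        rintro x ⟨hxH, hxC⟩
        by_contra hx
        refine hne ⟨x, hxH, hxC, fun E hEM hE hCE => ?_⟩
        by_contra hxE
        exact hx (mem_iUnion.2 ⟨⟨E, hEM, hE, hCE⟩, hxE⟩))
      (by
        intro D E
        rcases hchain _ D.2.2.1 _ E.2.2.1 with h | h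
        · exact ⟨D, Subset.rfl, compl_subset_compl.2 h⟩
        · exact ⟨E, compl_subset_compl.2 h, Subset.rfl⟩)
    obtain ⟨D, hDM, hD, hDC, hHD⟩ := hfdown E E H C hC hCE
      (disjoint_left.2 fun x hxH hx => hcov ⟨hxH, hx.2⟩ hx.1)
    exact ⟨D, hM E hEM E hEM H hHM hDM, E, hEM, hD, hE, hDC, hCE, hHD⟩
  have hΦsub : ∀ D ∈ M, D ∈ 𝒞 → D ⊆ C → ∀ E, C ⊆ E → Φ ⊆ E \ D :=
    fun D hDM hD hDC E hCE x hx => ⟨hCE hx.1, hx.2 D hDM hD hDC⟩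
  have hΨsub : ∀ D, D ⊆ C → ∀ E ∈ M, E ∈ 𝒞 → C ⊆ E → Ψ ⊆ E \ D :=
    fun D hDC E hEM hE hCE x hx => ⟨hx.2 E hEM hE hCE, fun h => hx.1 (hDC h)⟩
  let T := Φ ∪ Ψ
  let B : Set X → Prop := fun H => H ∈ M ∧ IsClosed H ∧ (H ∩ Φ).Nonempty
  have hBΨ : ∀ H, B H → (H ∩ Ψ).Nonempty := by
    rintro H ⟨hHM, hH, x, hxH, hxΦ⟩
    by_contra hne
    obtain ⟨D, hDM, E, hEM, hD, hE, hDC, hCE, hdis⟩ := hΨgap H hHM hH hne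
    exact disjoint_left.1 hdis hxH (hΦsub D hDM hD hDC E hCE hxΦ)
  have h₀ : B univ := by
    refine ⟨hMuniv, isClosed_univ, ?_⟩
    by_contra hne
    obtain ⟨D, hDM, E, hEM, hD, hE, hDC, hCE, hdis⟩ := hΦgap univ hMuniv isClosed_univ hne
    rw [univ_disjoint, sdiff_eq_empty] at hdis
    exact hCM (hDC.antisymm (hCE.trans hdis) ▸ hDM)
  have dichotomy : ∀ W, IsOpen W → ∀ H, H \ W ∈ M → B H →
      B (H \ W) ∨ ∃ H' ⊆ H, B H' ∧ H' ∩ T ⊆ W := by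
    intro W hW H hHW hH
    by_cases hne : ((H \ W) ∩ Φ).Nonempty
    · exact Or.inl ⟨hHW, hH.2.1.sdiff hW, hne⟩
    · obtain ⟨D, hDM, E, hEM, hD, hE, hDC, hCE, hdis⟩ := hΦgap _ hHW (hH.2.1.sdiff hW) hne
      refine Or.inr ⟨H, Subset.rfl, hH, ?_⟩
      rintro x ⟨hxH, hxT⟩
      by_contra hxW
      exact disjoint_left.1 hdis ⟨hxH, hxW⟩
        (union_subset (hΦsub D hDM hD hDC E hCE) (hΨsub D hDC E hEM hE hCE) hxT)
  have hV : ∀ n H, B H → Disjoint H (R n) → H ∩ T ⊆ ⋃₀ U n →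
      ∃ V ∈ U n, B (H \ ⋃₀ (U n \ {V})) := by
    rintro n H ⟨hHM, hH, x, hxH, hxΦ⟩ hHR hcov
    have hne : ¬ ((H \ ⋃₀ U n) ∩ Φ).Nonempty := by
      rintro ⟨y, ⟨hyH, hyU⟩, hyΦ⟩
      exact hyU (hcov ⟨hyH, Or.inl hyΦ⟩)
    obtain ⟨D, hDM, E, hEM, hD, hE, hDC, hCE, hdis⟩ := hΦgap _
      (hM H hHM H hHM H hHM (hfU H H H n)) (hH.sdiff (isOpen_sUnion (hUo n))) hne
    have hcov' : H ∩ (E \ D) ⊆ ⋃₀ U n := by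
      rintro y ⟨hyH, hy⟩
      by_contra hyU
      exact disjoint_left.1 hdis ⟨hyH, hyU⟩ hy
    obtain ⟨V, hVU, hxV⟩ := hcov ⟨hxH, Or.inl hxΦ⟩
    refine ⟨V, hVU, hM D hDM E hEM H hHM (hfV D E H n hH (hclopen D hD) (hclopen E hE) hHR hcov' V
      hVU ⟨x, hxV, hxH, hΦsub D hDM hD hDC E hCE hxΦ⟩),
      hH.sdiff (isOpen_sUnion fun W hW => hUo n W hW.1), x, ⟨hxH, ?_⟩, hxΦ⟩
    rintro ⟨W, ⟨hW, hWV⟩, hxW⟩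
    exact hWV ((hs n).eq_of_mem hW hVU hxW hxV (hHR.notMem_of_mem_left hxH))
  obtain ⟨H, hanti, hB, hH⟩ := exists_antitone_unsplit hs B T h₀
    (fun n H hBH => dichotomy _ (hRo n) H (hM H hBH.1 H hBH.1 H hBH.1 (hfR H H H n)) hBH)
    (fun n H hBH => dichotomy _ (isOpen_sUnion (hUo n)) H
      (hM H hBH.1 H hBH.1 H hBH.1 (hfU H H H n)) hBH) hV
  have hpt : ∀ Z, IsClosed Z → (∀ n, (H n ∩ Z).Nonempty) → ∃ x ∈ Z, ∀ n, x ∈ H n := by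
    intro Z hZ hne
    have hclosed : ∀ n, IsClosed (H n ∩ Z) := fun n => (hB n).2.1.inter hZ
    obtain ⟨y, hy⟩ := IsCompact.nonempty_iInter_of_sequence_nonempty_isCompact_isClosed
      (fun n => H n ∩ Z) (fun n => inter_subset_inter_left _ (hanti n.le_succ))
      hne (hclosed 0).isCompact hclosed
    rw [mem_iInter] at hy
    exact ⟨y, (hy 0).2, fun n => (hy n).1⟩
  obtain ⟨x, hxΦ, hxH⟩ := hpt Φ hΦclosed fun n => (hB n).2.2
  obtain ⟨y, hyΨ, hyH⟩ := hpt Ψ hΨclosed fun n => hBΨ _ (hB n)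
  obtain ⟨n, hn⟩ := hsep x y fun h => hyΨ.1 (h ▸ hxΦ.1)
  have hsub : ({x, y} : Set X) ⊆ H (n + 1) ∩ T :=
    insert_subset ⟨hxH _, Or.inl hxΦ⟩ (singleton_subset_iff.2 ⟨hyH _, Or.inr hyΨ⟩)
  exact hn fun V hVU a ha b hb => hH n V hVU a (hsub ha) b (hsub hb)

/-- Chains of clopen sets in a compact space with a `σ`-sunflower separating family are
countable. -/
theorem countable_clopen_chain {X : Type*} [TopologicalSpace X] [CompactSpace X]
    {U : ℕ → Set (Set X)} {R : ℕ → Set X}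
    (hUo : ∀ n, ∀ V ∈ U n, IsOpen V) (hRo : ∀ n, IsOpen (R n))
    (hs : ∀ n, IsSunflower (U n) (R n))
    (hsep : ∀ x y : X, x ≠ y → ∃ n, ¬ Unsplit (U n) {x, y})
    {𝒞 : Set (Set X)} (hclopen : ∀ C ∈ 𝒞, IsClopen C)
    (hchain : ∀ C ∈ 𝒞, ∀ D ∈ 𝒞, C ⊆ D ∨ D ⊆ C) : 𝒞.Countable := by
  have hclopen' : ∀ C ∈ insert ∅ (insert univ 𝒞), IsClopen C := by
    rintro C (rfl | rfl | hC)
    exacts [isClopen_empty, isClopen_univ, hclopen C hC]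
  have hchain' : ∀ C ∈ insert ∅ (insert univ 𝒞), ∀ D ∈ insert ∅ (insert univ 𝒞),
      C ⊆ D ∨ D ⊆ C := by
    rintro C (rfl | rfl | hC) D (rfl | rfl | hD)
    all_goals first | exact hchain _ hC _ hD | simp
  refine (countable_clopen_chain_of_cofinality hUo hRo hs hsep hclopen' hchain' (by simp) (by simp)
    ?_ ?_).mono ((subset_insert _ _).trans (subset_insert _ _))
  · intro 𝒟 h𝒟
    by_contra! hcon
    refine not_countably_directed_clopens hUo hRo hs hsep (fun D hD => hclopen' D (h𝒟 hD))
      fun S hS hSc => ?_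
    obtain ⟨D, hD, h⟩ := hcon S hS hSc
    exact ⟨D, hD, fun C hC =>
      ⟨(hchain' _ (h𝒟 (hS hC)) _ (h𝒟 hD)).resolve_right (h C hC), h C hC⟩⟩
  · intro 𝒟 h𝒟
    by_contra! hcon
    refine not_countably_directed_clopens hUo hRo hs hsep (𝒟 := compl '' 𝒟)
      (by rintro _ ⟨D, hD, rfl⟩; exact (hclopen' D (h𝒟 hD)).compl) fun S hS hSc => ?_
    have hS' : compl '' S ⊆ 𝒟 := by
      rintro _ ⟨C, hC, rfl⟩
      obtain ⟨D, hD, rfl⟩ := hS hC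
      rwa [compl_compl]
    obtain ⟨D, hD, h⟩ := hcon _ hS' (hSc.image _)
    refine ⟨Dᶜ, ⟨D, hD, rfl⟩, fun C hC => ?_⟩
    have hC' := h Cᶜ ⟨C, hC, rfl⟩
    have hDC := (hchain' _ (h𝒟 (hS' ⟨C, hC, rfl⟩)) _ (h𝒟 hD)).resolve_left hC'
    refine ⟨subset_compl_comm.1 hDC, fun hle => hC' (compl_subset_comm.1 hle)⟩

theorem PrecDelta.exists_le_abs {K : Type*} [TopologicalSpace K] [CompactSpace K] {δ : ℝ}
    (hδ : 0 < δ) {f g : C(K, ℝ)} (h : PrecDelta δ f g) : ∃ t, f t = 0 ∧ δ ≤ |g t| := by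
  obtain ⟨⟨-, heq⟩, hnorm⟩ := h
  have : ∃ t, δ ≤ ‖(f - g) t‖ := by
    by_contra! hlt
    exact hnorm.not_gt ((ContinuousMap.norm_lt_iff _ hδ).2 hlt)
  obtain ⟨t, ht⟩ := this
  have hf : f t = 0 := by
    by_contra hne
    have := heq t (subset_closure hne)
    simp [this] at ht
    exact ht.not_gt hδ
  exact ⟨t, hf, by simpa [hf] using ht⟩

theorem Prec.eq_of_ne_zero {K : Type*} [TopologicalSpace K] {f g : C(K, ℝ)} (h : Prec f g) {t : K}
    (ht : f t ≠ 0) : f t = g t :=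
  h.2 t (subset_closure ht)

/-- Every Gruenhage compact space has the Bishop property (B). -/
theorem stmt13 {K : Type*} [TopologicalSpace K] [CompactSpace K] [T2Space K]
    (U : ℕ → Set (Set K)) (R : ℕ → Set K)
    (hU : ∀ n, ∀ V ∈ U n, IsOpen V) (hR : ∀ n, IsOpen (R n))
    (h1 : ∀ n, ∀ V ∈ U n, ∀ W ∈ U n, V ≠ W → V ∩ W = R n)
    (h2 : ∀ s t : K, s ≠ t → ∃ m, ∃ V ∈ U m, Xor' (s ∈ V) (t ∈ V)) :
    HasBishop K := by
  classical
  intro δ hδ F hF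
  let A : C(K, ℝ) → Set K := fun f => {t | δ ≤ |f t|}
  have hne_zero : ∀ {f : C(K, ℝ)} {t : K}, t ∈ A f → f t ≠ 0 := by
    intro f t ht h
    simp only [A, mem_ofPred_eq, h, abs_zero] at ht
    exact ht.not_gt hδ
  let L : Set K := closure (⋃ f ∈ F, A f)
  have hAL : ∀ f ∈ F, A f ⊆ L := fun f hf => (subset_biUnion_of_mem hf).trans subset_closure
  have hLA : ∀ f ∈ F, ∀ t ∈ L, f t ≠ 0 → t ∈ A f := by
    intro f hf t htL hft
    by_contra htA
    have hopen : IsOpen {s | f s ≠ 0 ∧ |f s| < δ} :=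
      (isOpen_ne_fun f.continuous continuous_const).inter
        (isOpen_lt f.continuous.abs continuous_const)
    obtain ⟨s, ⟨hs0, hsδ⟩, hs⟩ := mem_closure_iff.1 htL _ hopen ⟨hft, not_le.1 htA⟩
    obtain ⟨g, hg, hsg⟩ := mem_iUnion₂.1 hs
    have hfg : f s = g s := by
      by_cases h : f = g
      · rw [h]
      · rcases hF f hf g hg h with h | h
        · exact h.1.eq_of_ne_zero hs0
        · exact (h.1.eq_of_ne_zero (hne_zero hsg)).symm
    exact hsδ.not_ge (hfg ▸ hsg)
  have hprec : ∀ f g, PrecDelta δ f g → A f ⊆ A g := by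
    intro f g h t ht
    simpa only [A, mem_ofPred_eq, h.1.eq_of_ne_zero (hne_zero ht)] using ht
  have hprec_ne : ∀ f g, PrecDelta δ f g → A f ≠ A g := by
    intro f g h heq
    obtain ⟨t, ht, htg⟩ := h.exists_le_abs hδ
    exact hne_zero (heq.symm ▸ htg : t ∈ A f) ht
  let φ : C(K, ℝ) → Set L := fun f => Subtype.val ⁻¹' A f
  have hinj : InjOn φ F := by
    intro f hf g hg heq
    have hA : A f = A g := by
      ext t
      constructor
      · intro ht
        exact (Set.ext_iff.1 heq ⟨t, hAL f hf ht⟩).1 ht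
      · intro ht
        exact (Set.ext_iff.1 heq ⟨t, hAL g hg ht⟩).2 ht
    by_contra hne
    rcases hF f hf g hg hne with h | h
    · exact hprec_ne f g h hA
    · exact hprec_ne g f h hA.symm
  have : CompactSpace L := isCompact_iff_compactSpace.1 isClosed_closure.isCompact
  -- A family with at most one member does not constrain its `R n`, so that one is discarded.
  let R' : ℕ → Set K := fun n => if (U n).Subsingleton then ∅ else R n
  have hsun : ∀ n, IsSunflower (U n) (R' n) := by
    intro n
    by_cases h : (U n).Subsingleton
    · simp only [IsSunflower, R', h, if_true]
      exact ⟨fun V _ => empty_subset V, fun V hV W hW hne => (hne (h hV hW)).elim⟩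
    · simp only [IsSunflower, R', h, if_false]
      refine ⟨fun V hV => ?_, fun V hV W hW hne => (h1 n V hV W hW hne).subset⟩
      obtain ⟨W, hW, hne⟩ := (not_subsingleton_iff.1 h).exists_ne V
      exact h1 n V hV W hW hne.symm ▸ inter_subset_left
  have hR' : ∀ n, IsOpen (R' n) := by
    intro n
    by_cases h : (U n).Subsingleton
    · simp [R', h]
    · simpa [R', h] using hR n
  refine (mapsTo_image φ F).countable_of_injOn hinj (countable_clopen_chain
    (U := fun n => preimage (Subtype.val : L → K) '' U n) (R := fun n => Subtype.val ⁻¹' R' n)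
    ?_ (fun n => (hR' n).preimage continuous_subtype_val) ?_ ?_ ?_ ?_)
  · rintro n _ ⟨V, hV, rfl⟩
    exact (hU n V hV).preimage continuous_subtype_val
  · intro n
    constructor
    · rintro _ ⟨V, hV, rfl⟩
      exact preimage_mono ((hsun n).1 V hV)
    · rintro _ ⟨V, hV, rfl⟩ _ ⟨W, hW, rfl⟩ hne
      exact preimage_mono ((hsun n).2 V hV W hW fun h => hne (h ▸ rfl))
  · intro x y hxy
    obtain ⟨n, V, hV, ⟨hx, hy⟩ | ⟨hy, hx⟩⟩ := h2 x y fun h => hxy (Subtype.ext h)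
    · exact ⟨n, fun h => hy (h _ ⟨V, hV, rfl⟩ x (by simp) y (by simp) hx)⟩
    · exact ⟨n, fun h => hx (h _ ⟨V, hV, rfl⟩ y (by simp) x (by simp) hy)⟩
  · rintro _ ⟨f, hf, rfl⟩
    refine ⟨(isClosed_le continuous_const f.continuous.abs).preimage continuous_subtype_val, ?_⟩
    have : φ f = Subtype.val ⁻¹' {t | f t ≠ 0} := by
      ext t
      exact ⟨fun ht => hne_zero ht, fun ht => hLA f hf t t.2 ht⟩
    rw [this]
    exact (isOpen_ne_fun f.continuous continuous_const).preimage continuous_subtype_val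
  · rintro _ ⟨f, hf, rfl⟩ _ ⟨g, hg, rfl⟩
    by_cases h : f = g
    · exact Or.inl (h ▸ Subset.rfl)
    · exact (hF f hf g hg h).imp (fun h => preimage_mono (hprec f g h))
        fun h => preimage_mono (hprec g f h)
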